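/- Let C be a Weyl candidate on Minkowski space V, let α, β be real numbers, let A := (1/8) C^{μνλρ} C_{μνλρ} and 𝖡 := (1/8) C^{μνλρ} (C*)_{μνλρ}, and let G_{μνλρ} := η_{μλ}η_{νρ} − η_{μρ}η_{νλ}. Then the 4-linear form ℛ_{μνλρ} := ½ C^{στ}_{ μν} C_{στλρ} + α C_{μνλρ} + β (C*)_{μνλρ} − (1/3)( A G_{μνλρ} − 𝖡 η_{μνλρ} ) is itself a Weyl candidate, i.e. it satisfies the pair antisymmetries, the pair-exchange symmetry, the first Bianchi identity, and trace-freeness with respect to η. -/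

import Mathlib

noncomputable section

/-- Minkowski space `V = ℝ⁴`. -/
abbrev V4 : Type := Fin 4 → ℝ

/-- The Minkowski bilinear form of signature `(-,+,+,+)`. -/
def η (x y : V4) : ℝ := -(x 0 * y 0) + x 1 * y 1 + x 2 * y 2 + x 3 * y 3

/-- The standard basis of `V4`. -/
def e4 (a : Fin 4) : V4 := Pi.single a 1

/-- Components of the Minkowski metric `diag(-1,1,1,1)` (its own inverse). -/
def ηm (a b : Fin 4) : ℝ := if a = b then (if a = (0 : Fin 4) then -1 else 1) else 0

/-- A 4-linear form on `V4`, given by its components in the standard basis. -/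
abbrev T4 : Type := Fin 4 → Fin 4 → Fin 4 → Fin 4 → ℝ

/-- A bilinear form on `V4`, given by its components in the standard basis. -/
abbrev T2 : Type := Fin 4 → Fin 4 → ℝ

/-- Evaluation of a 4-linear form (given by components) on vectors. -/
def eval4 (W : T4) (x y z w : V4) : ℝ :=
  ∑ a : Fin 4, ∑ b : Fin 4, ∑ c : Fin 4, ∑ d : Fin 4, W a b c d * x a * y b * z c * w d

/-- The alternating volume 4-form with `vol(e₀,e₁,e₂,e₃) = 1`. -/
def volv (x y z w : V4) : ℝ := Matrix.det (Matrix.of ![x, y, z, w])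

/-- Components `η_{αβγδ}` of the volume form. -/
def volc (a b c d : Fin 4) : ℝ := volv (e4 a) (e4 b) (e4 c) (e4 d)

/-- Left dual `(*W)_{μνλρ} = ½ η_{μν}{}^{αβ} W_{αβλρ}`. -/
def leftDual (W : T4) : T4 := fun μ ν lam ρ =>
  (1/2) * ∑ γ : Fin 4, ∑ δ : Fin 4, ∑ a : Fin 4, ∑ b : Fin 4,
    volc μ ν γ δ * ηm γ a * ηm δ b * W a b lam ρ

/-- Right dual `(W*)_{μνλρ} = ½ W_{μν}{}^{αβ} η_{αβλρ}`. -/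
def rightDual (W : T4) : T4 := fun μ ν lam ρ =>
  (1/2) * ∑ γ : Fin 4, ∑ δ : Fin 4, ∑ a : Fin 4, ∑ b : Fin 4,
    W μ ν a b * ηm a γ * ηm b δ * volc γ δ lam ρ

/-- A Weyl candidate: pair antisymmetries, pair exchange, first Bianchi, trace-free. -/
def IsWeyl (W : T4) : Prop :=
  (∀ x y z w : V4, eval4 W x y z w = - eval4 W y x z w) ∧
  (∀ x y z w : V4, eval4 W x y z w = - eval4 W x y w z) ∧
  (∀ x y z w : V4, eval4 W x y z w = eval4 W z w x y) ∧
  (∀ x y z w : V4, eval4 W x y z w + eval4 W x z w y + eval4 W x w y z = 0) ∧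
  (∀ x y : V4, ∑ a : Fin 4, ∑ b : Fin 4, ηm a b * eval4 W (e4 a) x (e4 b) y = 0)

/-- Electric part `E(W)_{ab} = W(e_a, n, e_b, n)`. -/
def Epart (W : T4) (n : V4) : T2 := fun a b => eval4 W (e4 a) n (e4 b) n

/-- Magnetic part `B(W)_{ab} = (W*)(e_a, n, e_b, n)`. -/
def Bpart (W : T4) (n : V4) : T2 := fun a b => eval4 (rightDual W) (e4 a) n (e4 b) n

/-- Raise both indices of a bilinear form's components. -/
def up2 (S : T2) : T2 := fun a b => ∑ c : Fin 4, ∑ d : Fin 4, ηm a c * ηm b d * S c d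

/-- Full contraction `S_{ab} T^{ab}`. -/
def contr2 (S T : T2) : ℝ := ∑ a : Fin 4, ∑ b : Fin 4, S a b * up2 T a b

/-- Raise all four indices with `η`. -/
def up4 (W : T4) : T4 := fun a b c d =>
  ∑ a' : Fin 4, ∑ b' : Fin 4, ∑ c' : Fin 4, ∑ d' : Fin 4,
    ηm a a' * ηm b b' * ηm c c' * ηm d d' * W a' b' c' d'

/-- Full contraction `S^{μνλρ} T_{μνλρ}`. -/
def contr4 (S T : T4) : ℝ :=
  ∑ a : Fin 4, ∑ b : Fin 4, ∑ c : Fin 4, ∑ d : Fin 4, up4 S a b c d * T a b c d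

/-- Components of `G_{μνλρ} = η_{μλ}η_{νρ} − η_{μρ}η_{νλ}`. -/
def Gc : T4 := fun μ ν lam ρ => ηm μ lam * ηm ν ρ - ηm μ ρ * ηm ν lam

lemma volc_eq (a b c d : Fin 4) :
    volc a b c d = ((b : ℝ) - a) * (c - a) * (d - a) * (c - b) * (d - b) * (d - c) / 12 := by
  have hmul : Matrix.of ![e4 a, e4 b, e4 c, e4 d] * Matrix.vandermonde (fun i : Fin 4 => (i : ℝ))
      = Matrix.vandermonde ![(a : ℝ), b, c, d] := by
    ext i j
    fin_cases i <;> simp [Matrix.mul_apply, Matrix.vandermonde, e4, Pi.single_apply]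
  have hdet := congrArg Matrix.det hmul
  have hcard : (Matrix.vandermonde (fun i : Fin 4 => (i : ℝ))).det = 12 := by
    simp [Matrix.det_vandermonde, Fin.prod_univ_succ, Fin.prod_Ioi_succ]
    norm_num
  rw [Matrix.det_mul, hcard, Matrix.det_vandermonde] at hdet
  simp [Fin.prod_univ_succ, Fin.prod_Ioi_succ] at hdet
  unfold volc volv
  linarith

lemma eval4_swap_fst_snd (W : T4) (x y z w : V4) :
    eval4 W y x z w = eval4 (fun a b c d => W b a c d) x y z w := by
  unfold eval4
  rw [Finset.sum_comm]
  simp only [mul_right_comm _ (y _) (x _)]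

lemma eval4_swap_snd_trd (W : T4) (x y z w : V4) :
    eval4 W x z y w = eval4 (fun a b c d => W a c b d) x y z w := by
  unfold eval4
  refine Finset.sum_congr rfl fun a _ => ?_
  rw [Finset.sum_comm]
  simp only [mul_right_comm _ (z _) (y _)]

lemma eval4_swap_trd_fth (W : T4) (x y z w : V4) :
    eval4 W x y w z = eval4 (fun a b c d => W a b d c) x y z w := by
  unfold eval4
  refine Finset.sum_congr rfl fun a _ => Finset.sum_congr rfl fun b _ => ?_
  rw [Finset.sum_comm]
  simp only [mul_right_comm _ (w _) (z _)]

lemma eval4_basis (W : T4) (a b c d : Fin 4) :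
    eval4 W (e4 a) (e4 b) (e4 c) (e4 d) = W a b c d := by
  simp [eval4, e4, Pi.single_apply]

lemma eval4_basis_fst_trd (W : T4) (a c : Fin 4) (x y : V4) :
    eval4 W (e4 a) x (e4 c) y = ∑ b, ∑ d, W a b c d * x b * y d := by
  simp [eval4, e4, Pi.single_apply]

lemma sum_ηm_mul (f : Fin 4 → Fin 4 → ℝ) :
    ∑ a, ∑ b, ηm a b * f a b = -f 0 0 + f 1 1 + f 2 2 + f 3 3 := by
  simp [ηm, Fin.sum_univ_four]

/-- The Weyl symmetries expressed through components in the standard basis. -/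
lemma isWeyl_iff (W : T4) : IsWeyl W ↔
    (∀ a b c d, W a b c d = -W b a c d) ∧
    (∀ a b c d, W a b c d = -W a b d c) ∧
    (∀ a b c d, W a b c d = W c d a b) ∧
    (∀ a b c d, W a b c d + W a c d b + W a d b c = 0) ∧
    (∀ b d, -W 0 b 0 d + W 1 b 1 d + W 2 b 2 d + W 3 b 3 d = 0) := by
  constructor
  · rintro ⟨h₁, h₂, h₃, h₄, h₅⟩
    refine ⟨fun a b c d => ?_, fun a b c d => ?_, fun a b c d => ?_, fun a b c d => ?_,
      fun b d => ?_⟩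
    · simpa only [eval4_basis] using h₁ (e4 a) (e4 b) (e4 c) (e4 d)
    · simpa only [eval4_basis] using h₂ (e4 a) (e4 b) (e4 c) (e4 d)
    · simpa only [eval4_basis] using h₃ (e4 a) (e4 b) (e4 c) (e4 d)
    · simpa only [eval4_basis] using h₄ (e4 a) (e4 b) (e4 c) (e4 d)
    · simpa only [eval4_basis, sum_ηm_mul] using h₅ (e4 b) (e4 d)
  · rintro ⟨h₁, h₂, h₃, h₄, h₅⟩
    refine ⟨fun x y z w => ?_, fun x y z w => ?_, fun x y z w => ?_, fun x y z w => ?_,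
      fun x y => ?_⟩
    · rw [eval4_swap_fst_snd W x y]
      simp only [eval4, ← Finset.sum_neg_distrib, ← neg_mul]
      simp only [← h₁]
    · rw [eval4_swap_trd_fth W x y z w]
      simp only [eval4, ← Finset.sum_neg_distrib, ← neg_mul]
      simp only [← h₂]
    · rw [eval4_swap_snd_trd W z x w y, eval4_swap_fst_snd _ x z, eval4_swap_trd_fth _ x z y w,
        eval4_swap_snd_trd _ x y z w]
      simp only [← h₃]
    · rw [eval4_swap_trd_fth W x z y w, eval4_swap_snd_trd _ x y z w,
        eval4_swap_snd_trd W x y w z, eval4_swap_trd_fth _ x y z w]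
      simp only [eval4, ← Finset.sum_add_distrib, ← add_mul]
      simp [h₄]
    · simp only [sum_ηm_mul, eval4_basis_fst_trd, ← Finset.sum_neg_distrib,
        ← Finset.sum_add_distrib, ← neg_mul, ← add_mul, h₅]
      simp

/-- Half the contraction of a symmetric array vanishing on the diagonal with `η^{aa} η^{bb}`,
as a sum over index pairs `a < b`. -/
def pairSum (f : Fin 4 → Fin 4 → ℝ) : ℝ := -f 0 1 - f 0 2 - f 0 3 + f 1 2 + f 1 3 + f 2 3

lemma ηm_comm (a b : Fin 4) : ηm a b = ηm b a := by
  unfold ηm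
  grind

lemma sum_ηm_left (i : Fin 4) (f : Fin 4 → ℝ) : ∑ j, ηm i j * f j = ηm i i * f i :=
  Finset.sum_eq_single i (fun j _ hj => by simp [ηm, hj.symm]) (by simp)

lemma sum_ηm_ηm (f : Fin 4 → Fin 4 → ℝ) (hf : ∀ a b, f a b = f b a) (h₀ : ∀ a, f a a = 0) :
    ∑ a, ∑ b, ηm a a * ηm b b * f a b = 2 * pairSum f := by
  simp only [Fin.sum_univ_four, h₀, hf 1 0, hf 2 0, hf 3 0, hf 2 1, hf 3 1, hf 3 2, pairSum]
  simp [ηm]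
  ring

lemma volc_swap_fst_snd (a b c d : Fin 4) : volc a b c d = -volc b a c d := by
  simp only [volc_eq]; ring

lemma volc_swap_trd_fth (a b c d : Fin 4) : volc a b c d = -volc a b d c := by
  simp only [volc_eq]; ring

lemma volc_pair_exchange (a b c d : Fin 4) : volc a b c d = volc c d a b := by
  simp only [volc_eq]; ring

lemma apply_self_fst_snd {W : T4} (h₁ : ∀ a b c d, W a b c d = -W b a c d) (a c d : Fin 4) :
    W a a c d = 0 := by
  linarith [h₁ a a c d]

lemma apply_self_trd_fth {W : T4} (h₂ : ∀ a b c d, W a b c d = -W a b d c) (a b c : Fin 4) :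
    W a b c c = 0 := by
  linarith [h₂ a b c c]

lemma quadratic_eq {C : T4} (h₁ : ∀ a b c d, C a b c d = -C b a c d) (μ ν l ρ : Fin 4) :
    ∑ σ : Fin 4, ∑ τ : Fin 4, ∑ σ' : Fin 4, ∑ τ' : Fin 4,
        ηm σ σ' * ηm τ τ' * C σ' τ' μ ν * C σ τ l ρ
    = 2 * pairSum fun σ τ => C σ τ μ ν * C σ τ l ρ := by
  rw [← sum_ηm_ηm]
  · refine Finset.sum_congr rfl fun σ _ => Finset.sum_congr rfl fun τ _ => ?_
    simp only [mul_assoc, ← Finset.mul_sum, sum_ηm_left]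
  · intro a b
    rw [h₁ a b, h₁ a b, neg_mul_neg]
  · intro a
    rw [apply_self_fst_snd h₁, zero_mul]

lemma rightDual_eq {C : T4} (h₂ : ∀ a b c d, C a b c d = -C a b d c) (μ ν l ρ : Fin 4) :
    rightDual C μ ν l ρ = pairSum fun a b => C μ ν a b * volc a b l ρ := by
  have h : 2 * rightDual C μ ν l ρ = 2 * pairSum fun a b => C μ ν a b * volc a b l ρ := by
    rw [← sum_ηm_ηm, rightDual, ← mul_assoc, mul_one_div_cancel two_ne_zero, one_mul]
    · refine Finset.sum_congr rfl fun γ _ => Finset.sum_congr rfl fun δ _ => ?_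
      have hterm (a b : Fin 4) : C μ ν a b * ηm a γ * ηm b δ * volc γ δ l ρ =
          ηm γ a * (ηm δ b * (C μ ν a b * volc γ δ l ρ)) := by
        rw [ηm_comm a, ηm_comm b]
        ring
      simp only [hterm, ← Finset.mul_sum, sum_ηm_left]
      ring
    · intro a b
      rw [h₂ μ ν a b, volc_swap_fst_snd a b, neg_mul_neg]
    · intro a
      rw [apply_self_trd_fth h₂, zero_mul]
  linarith

lemma up4_eq (W : T4) (a b c d : Fin 4) :
    up4 W a b c d = ηm a a * ηm b b * ηm c c * ηm d d * W a b c d := by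
  simp only [up4, mul_assoc, ← Finset.mul_sum, sum_ηm_left]

lemma contr4_eq {S T : T4} (hS₁ : ∀ a b c d, S a b c d = -S b a c d)
    (hS₂ : ∀ a b c d, S a b c d = -S a b d c) (hT₁ : ∀ a b c d, T a b c d = -T b a c d)
    (hT₂ : ∀ a b c d, T a b c d = -T a b d c) :
    contr4 S T = 4 * pairSum fun a b => pairSum fun c d => S a b c d * T a b c d := by
  have inner (a b : Fin 4) : ∑ c, ∑ d, up4 S a b c d * T a b c d =
      ηm a a * ηm b b * (2 * pairSum fun c d => S a b c d * T a b c d) := by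
    rw [← sum_ηm_ηm]
    · simp only [up4_eq, Finset.mul_sum]
      refine Finset.sum_congr rfl fun c _ => Finset.sum_congr rfl fun d _ => by ring
    · intro c d
      rw [hS₂ a b c d, hT₂ a b c d, neg_mul_neg]
    · intro c
      rw [apply_self_trd_fth hS₂, zero_mul]
  simp only [contr4, inner]
  rw [sum_ηm_ηm]
  · simp only [pairSum]
    ring
  · intro a b
    simp only [hS₁ a b, hT₁ a b, neg_mul_neg]
  · intro a
    simp [pairSum, apply_self_fst_snd hS₁]

lemma eq_zero_of_antisymm {f : Fin 4 → Fin 4 → ℝ} (hf : ∀ a b, f a b = -f b a)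
    (h : f 0 1 = 0 ∧ f 0 2 = 0 ∧ f 0 3 = 0 ∧ f 1 2 = 0 ∧ f 1 3 = 0 ∧ f 2 3 = 0) (a b : Fin 4) :
    f a b = 0 := by
  obtain ⟨h01, h02, h03, h12, h13, h23⟩ := h
  fin_cases a <;> fin_cases b <;> grind

/-- For a form with the pair symmetries, a single component carries the first Bianchi identity. -/
lemma bianchi_of_component {W : T4} (h₁ : ∀ a b c d, W a b c d = -W b a c d)
    (h₂ : ∀ a b c d, W a b c d = -W a b d c) (h₃ : ∀ a b c d, W a b c d = W c d a b)
    (h : W 0 1 2 3 + W 0 2 3 1 + W 0 3 1 2 = 0) (a b c d : Fin 4) :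
    W a b c d + W a c d b + W a d b c = 0 := by
  have hab (a b c d : Fin 4) : W a b c d + W a c d b + W a d b c =
      -(W b a c d + W b c d a + W b d a c) := by
    linarith [h₁ a b c d, h₃ a c d b, h₁ d b a c, h₃ b d a c, h₃ a d b c, h₂ b c a d]
  have hcd (a b c d : Fin 4) : W a b c d + W a c d b + W a d b c =
      -(W a b d c + W a d c b + W a c b d) := by
    linarith [h₂ a b c d, h₂ a c d b, h₂ a d b c]
  refine eq_zero_of_antisymm (f := fun a b => W a b c d + W a c d b + W a d b c)
    (fun a b => hab a b c d) ?_ a b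
  refine ⟨?_, ?_, ?_, ?_, ?_, ?_⟩ <;>
  refine eq_zero_of_antisymm (f := fun c d => W _ _ c d + W _ c d _ + W _ d _ c)
    (fun c d => hcd _ _ c d) ?_ c d <;>
  refine ⟨?_, ?_, ?_, ?_, ?_, ?_⟩ <;>
  grind

lemma rightDual_swap_fst_snd {C : T4} (h₁ : ∀ a b c d, C a b c d = -C b a c d)
    (μ ν l ρ : Fin 4) : rightDual C μ ν l ρ = -rightDual C ν μ l ρ := by
  simp only [rightDual, h₁ μ ν, neg_mul, Finset.sum_neg_distrib, mul_neg]

lemma rightDual_swap_trd_fth (C : T4) (μ ν l ρ : Fin 4) :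
    rightDual C μ ν l ρ = -rightDual C μ ν ρ l := by
  simp only [rightDual, volc_swap_trd_fth _ _ l ρ, Finset.sum_neg_distrib, mul_neg]

/-- The algebraic relations which leave ten independent components of a Weyl candidate. -/
lemma weyl_component_relations {C : T4} (h₁ : ∀ a b c d, C a b c d = -C b a c d)
    (h₂ : ∀ a b c d, C a b c d = -C a b d c)
    (h₄ : ∀ a b c d, C a b c d + C a c d b + C a d b c = 0)
    (h₅ : ∀ b d, -C 0 b 0 d + C 1 b 1 d + C 2 b 2 d + C 3 b 3 d = 0) :
    C 0 3 0 3 = -C 0 1 0 1 - C 0 2 0 2 ∧ C 1 2 1 2 = C 0 1 0 1 + C 0 2 0 2 ∧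
    C 1 3 1 3 = -C 0 2 0 2 ∧ C 2 3 2 3 = -C 0 1 0 1 ∧
    C 0 3 1 3 = -C 0 2 1 2 ∧ C 0 3 2 3 = C 0 1 1 2 ∧ C 0 2 2 3 = -C 0 1 1 3 ∧
    C 1 3 2 3 = C 0 1 0 2 ∧ C 1 2 2 3 = -C 0 1 0 3 ∧ C 1 2 1 3 = C 0 2 0 3 ∧
    C 0 3 1 2 = C 0 2 1 3 - C 0 1 2 3 := by
  have h₀ := apply_self_fst_snd h₁
  have h01 := h₅ 0 1
  have h02 := h₅ 0 2
  have h03 := h₅ 0 3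
  have h12 := h₅ 1 2
  have h13 := h₅ 1 3
  have h23 := h₅ 2 3
  have e0 := h₅ 0 0
  have e1 := h₅ 1 1
  have e2 := h₅ 2 2
  have e3 := h₅ 3 3
  have b := h₄ 0 1 2 3
  simp only [h₀, apply_self_trd_fth h₂, h₁ 1 0, h₁ 2 0, h₁ 3 0, h₁ 2 1, h₁ 3 1, h₁ 3 2,
    h₂ _ _ 1 0, h₂ _ _ 2 0, h₂ _ _ 3 0, h₂ _ _ 2 1, h₂ _ _ 3 1, h₂ _ _ 3 2] at *
  refine ⟨?_, ?_, ?_, ?_, ?_, ?_, ?_, ?_, ?_, ?_, ?_⟩ <;> linarith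

lemma rightDual_components {C : T4} (h₂ : ∀ a b c d, C a b c d = -C a b d c) (μ ν : Fin 4) :
    rightDual C μ ν 0 1 = C μ ν 2 3 ∧ rightDual C μ ν 0 2 = -C μ ν 1 3 ∧
    rightDual C μ ν 0 3 = C μ ν 1 2 ∧ rightDual C μ ν 1 2 = -C μ ν 0 3 ∧
    rightDual C μ ν 1 3 = C μ ν 0 2 ∧ rightDual C μ ν 2 3 = -C μ ν 0 1 := by
  have v3 : ((3 : Fin 4) : ℕ) = 3 := rfl
  simp only [rightDual_eq h₂, pairSum, volc_eq]
  norm_num [v3]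

/-- The right dual of a Weyl candidate is a Weyl candidate. -/
lemma isWeyl_rightDual {C : T4} (hC : IsWeyl C) : IsWeyl (rightDual C) := by
  obtain ⟨h₁, h₂, h₃, h₄, h₅⟩ := (isWeyl_iff C).1 hC
  obtain ⟨r₁, r₂, r₃, r₄, r₅, r₆, r₇, r₈, r₉, r₁₀, r₁₁⟩ := weyl_component_relations h₁ h₂ h₄ h₅
  have d01 := fun μ ν => (rightDual_components h₂ μ ν).1
  have d02 := fun μ ν => (rightDual_components h₂ μ ν).2.1
  have d03 := fun μ ν => (rightDual_components h₂ μ ν).2.2.1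
  have d12 := fun μ ν => (rightDual_components h₂ μ ν).2.2.2.1
  have d13 := fun μ ν => (rightDual_components h₂ μ ν).2.2.2.2.1
  have d23 := fun μ ν => (rightDual_components h₂ μ ν).2.2.2.2.2
  have k₁ := rightDual_swap_fst_snd h₁
  have k₂ := rightDual_swap_trd_fth C
  have k₃ (a b c d : Fin 4) : rightDual C a b c d = rightDual C c d a b := by
    have hcd (a b c d : Fin 4) : rightDual C a b c d - rightDual C c d a b =
        -(rightDual C a b d c - rightDual C d c a b) := by
      linarith [k₂ a b c d, k₁ c d a b]
    rw [← sub_eq_zero]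
    refine eq_zero_of_antisymm
      (f := fun a b => rightDual C a b c d - rightDual C c d a b)
      (fun a b => by linarith [k₁ a b c d, k₂ c d a b]) ?_ a b
    refine ⟨?_, ?_, ?_, ?_, ?_, ?_⟩ <;>
    refine eq_zero_of_antisymm
      (f := fun c d => rightDual C _ _ c d - rightDual C c d _ _)
      (hcd _ _) ?_ c d <;>
    simp only [d01, d02, d03, d12, d13, d23, h₃ 0 2 0 1, h₃ 0 3 0 1, h₃ 0 3 0 2, h₃ 1 2 0 1,
      h₃ 1 2 0 2, h₃ 1 2 0 3, h₃ 1 3 0 1, h₃ 1 3 0 2, h₃ 1 3 0 3, h₃ 1 3 1 2, h₃ 2 3 0 1,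
      h₃ 2 3 0 2, h₃ 2 3 0 3, h₃ 2 3 1 2, h₃ 2 3 1 3, r₁, r₂, r₃, r₄, r₅, r₆, r₇, r₈, r₉, r₁₀,
      r₁₁] <;>
    refine ⟨?_, ?_, ?_, ?_, ?_, ?_⟩ <;> ring
  refine (isWeyl_iff _).2 ⟨k₁, k₂, k₃, bianchi_of_component k₁ k₂ k₃ ?_, fun b d => ?_⟩
  · rw [k₂ 0 2 3 1, d23, d13, d12]
    linarith
  · fin_cases b <;> fin_cases d <;>
    simp [apply_self_fst_snd k₁, apply_self_trd_fth k₂, k₁ 1 0, k₁ 2 0, k₁ 3 0, k₁ 2 1, k₁ 3 1,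
      k₁ 3 2, k₂ _ _ 1 0, k₂ _ _ 2 0, k₂ _ _ 3 0, k₂ _ _ 2 1, k₂ _ _ 3 1, k₂ _ _ 3 2,
      d01, d02, d03, d12, d13, d23] <;>
    linarith [h₃ 0 1 0 2, h₃ 0 1 0 3, h₃ 0 1 1 2, h₃ 0 1 1 3, h₃ 0 1 2 3, h₃ 0 2 0 3, h₃ 0 2 1 2,
      h₃ 0 2 1 3, h₃ 0 2 2 3, h₃ 0 3 1 2, h₃ 0 3 1 3, h₃ 0 3 2 3, h₃ 1 2 1 3, h₃ 1 2 2 3,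
      h₃ 1 3 2 3]

/-- The square `½ C^{στ}{}_{μν} C_{στλρ}` of a Weyl candidate with its trace and its totally
antisymmetric part removed. -/
def correctedSquare (C : T4) : T4 := fun μ ν l ρ =>
  (pairSum fun σ τ => C σ τ μ ν * C σ τ l ρ)
    - (1/3) * ((1/8) * contr4 C C * Gc μ ν l ρ
      - (1/8) * contr4 C (rightDual C) * volc μ ν l ρ)

lemma isWeyl_correctedSquare {C : T4} (hC : IsWeyl C) : IsWeyl (correctedSquare C) := by
  obtain ⟨h₁, h₂, h₃, h₄, h₅⟩ := (isWeyl_iff C).1 hC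
  obtain ⟨r₁, r₂, r₃, r₄, r₅, r₆, r₇, r₈, r₉, r₁₀, r₁₁⟩ := weyl_component_relations h₁ h₂ h₄ h₅
  have d01 := fun μ ν => (rightDual_components h₂ μ ν).1
  have d02 := fun μ ν => (rightDual_components h₂ μ ν).2.1
  have d03 := fun μ ν => (rightDual_components h₂ μ ν).2.2.1
  have d12 := fun μ ν => (rightDual_components h₂ μ ν).2.2.2.1
  have d13 := fun μ ν => (rightDual_components h₂ μ ν).2.2.2.2.1
  have d23 := fun μ ν => (rightDual_components h₂ μ ν).2.2.2.2.2
  have hA := contr4_eq h₁ h₂ h₁ h₂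
  have hB := contr4_eq h₁ h₂ (rightDual_swap_fst_snd h₁) (rightDual_swap_trd_fth C)
  simp only [pairSum, d01, d02, d03, d12, d13, d23, h₃ 0 2 0 1, h₃ 0 3 0 1, h₃ 0 3 0 2, h₃ 1 2 0 1,
    h₃ 1 2 0 2, h₃ 1 2 0 3, h₃ 1 3 0 1, h₃ 1 3 0 2, h₃ 1 3 0 3, h₃ 1 3 1 2, h₃ 2 3 0 1,
    h₃ 2 3 0 2, h₃ 2 3 0 3, h₃ 2 3 1 2, h₃ 2 3 1 3, r₁, r₂, r₃, r₄, r₅, r₆, r₇, r₈, r₉, r₁₀,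
    r₁₁] at hA hB
  have k₁ (μ ν l ρ : Fin 4) : correctedSquare C μ ν l ρ = -correctedSquare C ν μ l ρ := by
    simp only [correctedSquare, pairSum, Gc, h₂ _ _ μ ν, volc_swap_fst_snd μ ν]
    ring
  have k₃ (μ ν l ρ : Fin 4) : correctedSquare C μ ν l ρ = correctedSquare C l ρ μ ν := by
    simp only [correctedSquare, pairSum, Gc, volc_pair_exchange μ ν, ηm_comm μ, ηm_comm ν]
    ring
  have k₂ (μ ν l ρ : Fin 4) : correctedSquare C μ ν l ρ = -correctedSquare C μ ν ρ l := by
    rw [k₃, k₁, k₃ ρ]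
  refine (isWeyl_iff _).2 ⟨k₁, k₂, k₃, bianchi_of_component k₁ k₂ k₃ ?_, fun b d => ?_⟩
  · have v3 : ((3 : Fin 4) : ℕ) = 3 := rfl
    have hvol : volc 0 1 2 3 = 1 ∧ volc 0 2 3 1 = 1 ∧ volc 0 3 1 2 = 1 := by
      norm_num [volc_eq, v3]
    have hG : Gc 0 1 2 3 = 0 ∧ Gc 0 2 3 1 = 0 ∧ Gc 0 3 1 2 = 0 := by
      simp [Gc, ηm]
    simp only [correctedSquare, hB, pairSum, hG, hvol, h₂ _ _ 3 1, h₃ 0 2 0 1, h₃ 0 3 0 1, h₃ 0 3 0 2,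
      h₃ 1 2 0 1, h₃ 1 2 0 2, h₃ 1 2 0 3, h₃ 1 3 0 1, h₃ 1 3 0 2, h₃ 1 3 0 3, h₃ 1 3 1 2,
      h₃ 2 3 0 1, h₃ 2 3 0 2, h₃ 2 3 0 3, h₃ 2 3 1 2, h₃ 2 3 1 3, r₁, r₂, r₃, r₄, r₅, r₆, r₇, r₈,
      r₉, r₁₀, r₁₁]
    ring
  · have hvol (a b d : Fin 4) : volc a b a d = 0 := by simp [volc_eq]
    simp only [correctedSquare, hA, hvol, pairSum, Gc]
    fin_cases b <;> fin_cases d <;>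
    simp [ηm, apply_self_trd_fth h₂, h₂ _ _ 1 0, h₂ _ _ 2 0, h₂ _ _ 3 0, h₂ _ _ 2 1, h₂ _ _ 3 1,
      h₂ _ _ 3 2, h₃ 0 2 0 1, h₃ 0 3 0 1, h₃ 0 3 0 2,
      h₃ 1 2 0 1, h₃ 1 2 0 2, h₃ 1 2 0 3, h₃ 1 3 0 1, h₃ 1 3 0 2, h₃ 1 3 0 3, h₃ 1 3 1 2,
      h₃ 2 3 0 1, h₃ 2 3 0 2, h₃ 2 3 0 3, h₃ 2 3 1 2, h₃ 2 3 1 3, r₁, r₂, r₃, r₄, r₅, r₆, r₇, r₈,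
      r₉, r₁₀, r₁₁] <;>
    ring

/-- Weyl candidates form a linear space. -/
lemma isWeyl_linear_comb {S T U : T4} (hS : IsWeyl S) (hT : IsWeyl T) (hU : IsWeyl U) (α β : ℝ) :
    IsWeyl fun a b c d => S a b c d + α * T a b c d + β * U a b c d := by
  rw [isWeyl_iff] at *
  obtain ⟨s₁, s₂, s₃, s₄, s₅⟩ := hS
  obtain ⟨t₁, t₂, t₃, t₄, t₅⟩ := hT
  obtain ⟨u₁, u₂, u₃, u₄, u₅⟩ := hU
  refine ⟨fun a b c d => ?_, fun a b c d => ?_, fun a b c d => ?_, fun a b c d => ?_,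
    fun b d => ?_⟩
  · linear_combination s₁ a b c d + α * t₁ a b c d + β * u₁ a b c d
  · linear_combination s₂ a b c d + α * t₂ a b c d + β * u₂ a b c d
  · linear_combination s₃ a b c d + α * t₃ a b c d + β * u₃ a b c d
  · linear_combination s₄ a b c d + α * t₄ a b c d + β * u₄ a b c d
  · linear_combination s₅ b d + α * t₅ b d + β * u₅ b d

/-- the 4-linear form
`ℛ = ½ C^{στ}{}_{μν}C_{στλρ} + αC + βC* − (1/3)(A G − 𝖡 η)` is itself a Weyl candidate. -/
theorem stmt_6 (C : T4) (hC : IsWeyl C) (α β : ℝ)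
    (A Bs : ℝ) (hA : A = (1/8) * contr4 C C) (hBs : Bs = (1/8) * contr4 C (rightDual C))
    (R : T4)
    (hR : R = fun μ ν lam ρ =>
      (1/2) * (∑ σ : Fin 4, ∑ τ : Fin 4, ∑ σ' : Fin 4, ∑ τ' : Fin 4,
        ηm σ σ' * ηm τ τ' * C σ' τ' μ ν * C σ τ lam ρ)
      + α * C μ ν lam ρ + β * rightDual C μ ν lam ρ
      - (1/3) * (A * Gc μ ν lam ρ - Bs * volc μ ν lam ρ)) :
    IsWeyl R := by
  subst hR hA hBs
  have h₁ := ((isWeyl_iff C).1 hC).1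
  convert isWeyl_linear_comb (isWeyl_correctedSquare hC) hC (isWeyl_rightDual hC) α β using 5
  rw [quadratic_eq h₁, correctedSquare]
  ring
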